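/- Let ν, b, μ ∈ ℂ with ν ≠ 0 and μ ≠ 0, suppose b² = 16μν, let k, ξ₀ ∈ ℂ with k² = −μ/ν, and set A = −8 μ³/ν. Then the function u(ξ) = 120ν τ(ξ)³ − 15b τ(ξ)² + (60μ/19 − 30νk² − 15b²/(76ν)) τ(ξ) + (5/2)b k² − 13b³/(608ν²) + 7μb/(76ν), where τ(ξ) = (k/2)·tanh(k(ξ−ξ₀)/2), solves the KS ODE on the open set U = {ξ ∈ ℂ : cosh(k(ξ−ξ₀)/2) ≠ 0}. -/

import Mathlib

open Complex

/-!
On the domain `U` the function `τ` solves the Riccati equation `τ' = κ - τ²` with `κ = k² / 4`, so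
differentiation acts on polynomials in `τ` as the derivation `D` of `ℂ[X]` with `D X = κ - X²`.
Since `b² = 16μν` and `4κ = -μ/ν` give `μ = -4νκ` and `b² = -64ν²κ`, the function `u` is a
polynomial in `τ` whose coefficients are integral in `ν`, `b`, `κ`, and the ODE becomes an identity
in `ℂ[X]`, which holds modulo `b² + 64ν²κ`.
-/

section PolynomialIdentity

open Polynomial

variable {R : Type*} [CommRing R]

/-- The Kuramoto–Sivashinsky profile as a polynomial in a solution `τ` of the Riccati equation
`τ' = κ - τ²`. Using `κ`, which is `k² / 4` for `τ = (k/2) tanh (k(ξ - ξ₀)/2)`, instead of `k`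
makes all coefficients integral. -/
noncomputable def ksProfile (ν b κ : R) : R[X] :=
  120 * C ν * X ^ 3 - 15 * C b * X ^ 2 - 120 * C ν * C κ * X + 11 * C b * C κ

theorem eval_ksProfile (ν b κ x : R) :
    (ksProfile ν b κ).eval x = 120 * ν * x ^ 3 - 15 * b * x ^ 2 - 120 * ν * κ * x + 11 * b * κ := by
  simp [ksProfile]

/-- The derivation `(κ - X²) d/dX`. It acts on polynomials in a solution of the Riccati equation
`τ' = κ - τ²` as differentiation with respect to the independent variable. -/
noncomputable def riccatiDerivation (κ : R) : Derivation R R[X] R[X] :=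
  mkDerivation R (C κ - X ^ 2)

theorem riccatiDerivation_apply (κ : R) (p : R[X]) :
    riccatiDerivation κ p = derivative p * (C κ - X ^ 2) :=
  mkDerivation_apply ..

theorem riccatiDerivation_ksProfile (ν b κ : R) :
    riccatiDerivation κ (ksProfile ν b κ) =
      (360 * C ν * X ^ 2 - 30 * C b * X - 120 * C ν * C κ) * (C κ - X ^ 2) := by
  rw [riccatiDerivation_apply]
  simp only [ksProfile, derivative_add, derivative_sub, derivative_mul, derivative_ofNat,
    derivative_C, derivative_X_pow, derivative_X, Nat.cast_ofNat, map_ofNat]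
  ring

theorem riccatiDerivation_iterate_two_ksProfile (ν b κ : R) :
    (riccatiDerivation κ)^[2] (ksProfile ν b κ) =
      (-1440 * C ν * X ^ 3 + 90 * C b * X ^ 2 + 960 * C ν * C κ * X - 30 * C b * C κ)
        * (C κ - X ^ 2) := by
  rw [Function.iterate_succ_apply', Function.iterate_one, riccatiDerivation_ksProfile,
    riccatiDerivation_apply]
  simp only [derivative_sub, derivative_mul, derivative_ofNat, derivative_C, derivative_X_pow,
    derivative_X, Nat.cast_ofNat, map_ofNat]
  ring

theorem riccatiDerivation_iterate_three_ksProfile (ν b κ : R) :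
    (riccatiDerivation κ)^[3] (ksProfile ν b κ) =
      (7200 * C ν * X ^ 4 - 360 * C b * X ^ 3 - 7200 * C ν * C κ * X ^ 2
        + 240 * C b * C κ * X + 960 * C ν * C κ ^ 2) * (C κ - X ^ 2) := by
  rw [Function.iterate_succ_apply', riccatiDerivation_iterate_two_ksProfile,
    riccatiDerivation_apply]
  simp only [derivative_add, derivative_sub, derivative_neg, derivative_mul, derivative_ofNat,
    derivative_C, derivative_X_pow, derivative_X, Nat.cast_ofNat, map_ofNat]
  ring

-- Doubling the equation clears the denominator of `u² / 2`.
theorem ksProfile_equation {ν b κ : R} (hb : b ^ 2 = -64 * ν ^ 2 * κ) :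
    2 * (C ν * (riccatiDerivation κ)^[3] (ksProfile ν b κ)
        + C b * (riccatiDerivation κ)^[2] (ksProfile ν b κ)
        - 4 * C ν * C κ * riccatiDerivation κ (ksProfile ν b κ) + 512 * C ν ^ 2 * C κ ^ 3)
      + ksProfile ν b κ ^ 2 = 0 := by
  have hbC : C b ^ 2 = -64 * C ν ^ 2 * C κ := by
    simpa only [map_pow, map_mul, map_neg, map_ofNat] using congrArg C hb
  rw [riccatiDerivation_iterate_three_ksProfile, riccatiDerivation_iterate_two_ksProfile,
    riccatiDerivation_ksProfile, ksProfile]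
  linear_combination (45 * X ^ 4 - 90 * C κ * X ^ 2 + 61 * C κ ^ 2) * hbC

end PolynomialIdentity

section AutonomousODE

open Polynomial Set

variable {𝕜 : Type*} [NontriviallyNormedField 𝕜] {U : Set 𝕜} {τ f : 𝕜 → 𝕜} {q p : 𝕜[X]}

theorem deriv_eqOn_eval_mkDerivation (hU : IsOpen U)
    (hτ : ∀ x ∈ U, HasDerivAt τ (q.eval (τ x)) x) (hf : EqOn f (fun x ↦ p.eval (τ x)) U) :
    EqOn (deriv f) (fun x ↦ (mkDerivation 𝕜 q p).eval (τ x)) U := by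
  refine deriv_eqOn hU fun x hx ↦ ?_
  have hcomp : HasDerivAt (fun y ↦ p.eval (τ y)) ((mkDerivation 𝕜 q p).eval (τ x)) x := by
    rw [mkDerivation_apply, smul_eq_mul, eval_mul]
    exact (p.hasDerivAt (τ x)).comp x (hτ x hx)
  exact hcomp.hasDerivWithinAt.congr hf (hf hx)

theorem iterate_deriv_eqOn_eval_iterate_mkDerivation (hU : IsOpen U)
    (hτ : ∀ x ∈ U, HasDerivAt τ (q.eval (τ x)) x) (hf : EqOn f (fun x ↦ p.eval (τ x)) U) (n : ℕ) :
    EqOn (deriv^[n] f) (fun x ↦ ((mkDerivation 𝕜 q)^[n] p).eval (τ x)) U := by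
  induction n with
  | zero => exact hf
  | succ n ih =>
    simpa only [Function.iterate_succ_apply'] using deriv_eqOn_eval_mkDerivation hU hτ ih

end AutonomousODE

section KuramotoSivashinsky

open Polynomial

variable {𝕜 : Type*} [NontriviallyNormedField 𝕜] [CharZero 𝕜] {ν b κ : 𝕜} {U : Set 𝕜}
  {τ u : 𝕜 → 𝕜}

theorem ks_equation_of_eqOn_ksProfile (hb : b ^ 2 = -64 * ν ^ 2 * κ) (hU : IsOpen U)
    (hτ : ∀ ξ ∈ U, HasDerivAt τ (κ - τ ξ ^ 2) ξ)
    (hu : Set.EqOn u (fun ξ ↦ (ksProfile ν b κ).eval (τ ξ)) U) {ξ : 𝕜} (hξ : ξ ∈ U) :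
    ν * deriv^[3] u ξ + b * deriv^[2] u ξ - 4 * ν * κ * deriv u ξ + u ξ ^ 2 / 2
      + 512 * ν ^ 2 * κ ^ 3 = 0 := by
  have hτ' : ∀ ξ ∈ U, HasDerivAt τ ((C κ - X ^ 2 : 𝕜[X]).eval (τ ξ)) ξ := by
    simpa only [eval_sub, eval_pow, eval_C, eval_X] using hτ
  have hderiv (n : ℕ) :
      deriv^[n] u ξ = ((riccatiDerivation κ)^[n] (ksProfile ν b κ)).eval (τ ξ) :=
    iterate_deriv_eqOn_eval_iterate_mkDerivation hU hτ' hu n hξ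
  have hderiv_one : deriv u ξ = (riccatiDerivation κ (ksProfile ν b κ)).eval (τ ξ) := hderiv 1
  have hpoly := congrArg (eval (τ ξ)) (ksProfile_equation hb)
  simp only [eval_add, eval_sub, eval_mul, eval_pow, eval_C, eval_ofNat, eval_zero] at hpoly
  rw [hderiv 3, hderiv 2, hderiv_one, hu hξ]
  linear_combination hpoly / 2

theorem ks_trig_solution_case6_general {μ A : 𝕜} (hν : ν ≠ 0) (hb : b ^ 2 = 16 * μ * ν)
    (hκ : 4 * κ = -μ / ν) (hA : A = -8 * μ ^ 3 / ν) (hU : IsOpen U)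
    (hτ : ∀ ξ ∈ U, HasDerivAt τ (κ - τ ξ ^ 2) ξ)
    (hu : ∀ ξ ∈ U, u ξ =
      120 * ν * (τ ξ) ^ 3 - 15 * b * (τ ξ) ^ 2
        + (60 * μ / 19 - 30 * ν * (4 * κ) - 15 * b ^ 2 / (76 * ν)) * τ ξ
        + 5 / 2 * b * (4 * κ) - 13 * b ^ 3 / (608 * ν ^ 2) + 7 * μ * b / (76 * ν)) :
    ∀ ξ ∈ U, ν * deriv^[3] u ξ + b * deriv^[2] u ξ + μ * deriv u ξ + (u ξ) ^ 2 / 2 + A = 0 := by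
  have hμ : μ = -4 * ν * κ := by
    linear_combination (eq_div_iff hν).mp hκ
  have hb' : b ^ 2 = -64 * ν ^ 2 * κ := by rw [hb, hμ]; ring
  have hA' : A = 512 * ν ^ 2 * κ ^ 3 := by
    rw [hA, hμ]
    field_simp
    ring
  have hu' : Set.EqOn u (fun ξ ↦ (ksProfile ν b κ).eval (τ ξ)) U := fun ξ hξ ↦ by
    simp only [hu ξ hξ, eval_ksProfile, pow_succ' b 2, hb', hμ]
    field_simp
    ring
  intro ξ hξ
  rw [hA', hμ]
  linear_combination ks_equation_of_eqOn_ksProfile hb' hU hτ hu' hξ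

end KuramotoSivashinsky

section Tanh

theorem hasDerivAt_complex_tanh {z : ℂ} (hz : cosh z ≠ 0) :
    HasDerivAt tanh (1 - tanh z ^ 2) z := by
  have hquot : HasDerivAt (fun w ↦ sinh w / cosh w)
      ((cosh z * cosh z - sinh z * sinh z) / cosh z ^ 2) z :=
    (hasDerivAt_sinh z).div (hasDerivAt_cosh z) hz
  simp only [← tanh_eq_sinh_div_cosh] at hquot
  refine hquot.congr_deriv ?_
  rw [tanh_eq_sinh_div_cosh]
  field_simp

theorem hasDerivAt_const_mul_tanh_comp {g : ℂ → ℂ} {a ξ : ℂ} (hg : HasDerivAt g a ξ)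
    (hξ : cosh (g ξ) ≠ 0) :
    HasDerivAt (fun ζ ↦ a * tanh (g ζ)) (a ^ 2 - (a * tanh (g ξ)) ^ 2) ξ := by
  refine (((hasDerivAt_complex_tanh hξ).comp ξ hg).const_mul a).congr_deriv ?_
  ring

end Tanh

/-- a trigonometric (tanh-polynomial) solution of the KS traveling-wave ODE
`ν u''' + b u'' + μ u' + u²/2 + A = 0`. -/
theorem ks_trig_solution_case6
    (ν b μ A k ξ₀ : ℂ) (hν : ν ≠ 0) (hμ : μ ≠ 0)
    (hb : b ^ 2 = 16 * μ * ν) (hk : k ^ 2 = -μ / ν)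
    (hA : A = -8 * μ ^ 3 / ν)
    (τ u : ℂ → ℂ)
    (hτ : ∀ ξ : ℂ, τ ξ = k / 2 * Complex.tanh (k * (ξ - ξ₀) / 2))
    (hu : ∀ ξ : ℂ, u ξ =
      120 * ν * (τ ξ) ^ 3 - 15 * b * (τ ξ) ^ 2
        + (60 * μ / 19 - 30 * ν * k ^ 2 - 15 * b ^ 2 / (76 * ν)) * τ ξ
        + 5 / 2 * b * k ^ 2 - 13 * b ^ 3 / (608 * ν ^ 2) + 7 * μ * b / (76 * ν)) :
    ∀ ξ : ℂ, Complex.cosh (k * (ξ - ξ₀) / 2) ≠ 0 →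
      ν * deriv^[3] u ξ + b * deriv^[2] u ξ + μ * deriv u ξ + (u ξ) ^ 2 / 2 + A = 0 := by
  obtain rfl : τ = fun ξ ↦ k / 2 * tanh (k * (ξ - ξ₀) / 2) := funext hτ
  have hU : IsOpen {ξ : ℂ | cosh (k * (ξ - ξ₀) / 2) ≠ 0} :=
    isOpen_ne_fun (by fun_prop) continuous_const
  have hphase (ξ : ℂ) : HasDerivAt (fun ζ ↦ k * (ζ - ξ₀) / 2) (k / 2) ξ := by
    simpa using (((hasDerivAt_id ξ).sub_const ξ₀).const_mul k).div_const 2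
  have hκ : 4 * (k / 2) ^ 2 = -μ / ν := by rw [← hk]; ring
  exact ks_trig_solution_case6_general hν hb hκ hA hU
    (fun ξ ↦ hasDerivAt_const_mul_tanh_comp (hphase ξ)) (fun ξ _ ↦ by rw [hu]; ring)
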